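/- Let A and B be abelian categories with enough injectives, and let L : B ⥤ A and U : A ⥤ B be an adjoint pair (L left adjoint to U) with both L and U exact. Assume that every object N of A admits a two-step resolution by objects induced from B, i.e., an exact sequence 0 → L(N₁) → L(N₂) → N → 0 for some objects N₁, N₂ of B. Fix a natural number d. If every object of B admits an injective resolution of length at most d, then every object of A admits an injective resolution of length at most d + 1. -/

import Mathlib

open CategoryTheory Limits

/-- `M` admits an injective resolution of length at most `d`, i.e. an exact sequence
`0 → M → I⁰ → I¹ → ⋯ → I^d → 0` with every `I^j` injective.  We encode the sequence by
extending it by zero objects in degrees `> d`. -/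
def HasInjectiveResolutionOfLength {C : Type*} [Category C] [Abelian C] (d : ℕ) (M : C) :
    Prop :=
  ∃ (I : ℕ → C) (ι : M ⟶ I 0) (δ : ∀ j : ℕ, I j ⟶ I (j + 1))
    (w0 : ι ≫ δ 0 = 0) (w : ∀ j : ℕ, δ j ≫ δ (j + 1) = 0),
    (∀ j : ℕ, j ≤ d → Injective (I j)) ∧
    (∀ j : ℕ, d < j → IsZero (I j)) ∧
    Mono ι ∧
    (ShortComplex.mk ι (δ 0) w0).Exact ∧
    (∀ j : ℕ, (ShortComplex.mk (δ j) (δ (j + 1)) (w j)).Exact)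

/-!
If `U M` is injective and `0 → M → I → Q → 0` is exact with `I` injective, then `U` turns this
sequence into a split one, so by adjunction every morphism `L N ⟶ Q` lifts to `I` and hence
`Ext¹(L N, M) = 0`. As `U` is exact and preserves injectives, dimension shifting gives
`Ext^i(L N, M) = 0` for all `i > d` once `U M` has injective dimension at most `d`. The long exact
sequence of `0 → L N₁ → L N₂ → N → 0` then shows `Ext^i(N, M) = 0` for all `i > d + 1`.
-/

section Exactness

variable {C : Type*} [Category C] [Abelian C]

lemma exact_comp_mono_iff (S : ShortComplex C) {Y : C} (i : S.X₃ ⟶ Y) [Mono i] :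
    (ShortComplex.mk S.f (S.g ≫ i) (by simp)).Exact ↔ S.Exact := by
  let φ : S ⟶ ShortComplex.mk S.f (S.g ≫ i) (by simp) := { τ₁ := 𝟙 _, τ₂ := 𝟙 _, τ₃ := i }
  have : Epi φ.τ₁ := inferInstanceAs (Epi (𝟙 S.X₁))
  have : IsIso φ.τ₂ := inferInstanceAs (IsIso (𝟙 S.X₂))
  have : Mono φ.τ₃ := ‹Mono i›
  exact (ShortComplex.exact_iff_of_epi_of_isIso_of_mono φ).symm

lemma exact_epi_comp_iff (S : ShortComplex C) {Y : C} (p : Y ⟶ S.X₁) [Epi p] :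
    (ShortComplex.mk (p ≫ S.f) S.g (by simp)).Exact ↔ S.Exact := by
  let φ : ShortComplex.mk (p ≫ S.f) S.g (by simp) ⟶ S := { τ₁ := p, τ₂ := 𝟙 _, τ₃ := 𝟙 _ }
  have : Epi φ.τ₁ := ‹Epi p›
  have : IsIso φ.τ₂ := inferInstanceAs (IsIso (𝟙 S.X₂))
  have : Mono φ.τ₃ := inferInstanceAs (Mono (𝟙 S.X₃))
  exact ShortComplex.exact_iff_of_epi_of_isIso_of_mono φ

end Exactness

namespace HasInjectiveResolutionOfLength

variable {C : Type*} [Category C] [Abelian C] {d : ℕ} {M : C}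

lemma injective (h : HasInjectiveResolutionOfLength 0 M) : Injective M := by
  obtain ⟨I, ι, δ, w0, -, hI, hZ, hι, hexact, -⟩ := h
  have : Epi ι := hexact.epi_f ((hZ 1 one_pos).eq_of_tgt _ _)
  have : IsIso ι := isIso_of_mono_of_epi ι
  exact Injective.of_iso (asIso ι).symm (hI 0 le_rfl)

lemma of_injective [Injective M] : HasInjectiveResolutionOfLength 0 M := by
  refine ⟨fun | 0 => M | _ + 1 => ⊥_ C, 𝟙 M, fun _ => 0, comp_zero, fun _ => comp_zero,
    ?_, ?_, inferInstanceAs (Mono (𝟙 M)), ?_, fun _ => ?_⟩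
  · rintro (_ | j) hj
    · assumption
    · lia
  · rintro (_ | j) hj
    · lia
    · exact initialIsInitial.isZero
  · exact (ShortComplex.exact_iff_epi _ rfl).2 (inferInstanceAs (Epi (𝟙 M)))
  · exact ShortComplex.exact_of_isZero_X₂ _ initialIsInitial.isZero

lemma exists_injectivePresentation (h : HasInjectiveResolutionOfLength (d + 1) M) :
    ∃ p : InjectivePresentation M, HasInjectiveResolutionOfLength d (cokernel p.f) := by
  obtain ⟨I, ι, δ, w0, w, hI, hZ, hι, hexact₀, hexact⟩ := h
  have w' : cokernel.desc ι (δ 0) w0 ≫ δ 1 = 0 := by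
    rw [← cancel_epi (cokernel.π ι), cokernel.π_desc_assoc, w 0, comp_zero]
  have exact_desc : (ShortComplex.mk (cokernel.desc ι (δ 0) w0) (δ 1) w').Exact := by
    rw [← exact_epi_comp_iff _ (cokernel.π ι)]
    simpa only [cokernel.π_desc] using hexact 0
  exact ⟨{ J := I 0, injective := hI 0 (by lia), f := ι },
    fun j => I (j + 1), cokernel.desc ι (δ 0) w0, fun j => δ (j + 1), w', fun j => w (j + 1),
    fun j hj => hI _ (by lia), fun j hj => hZ _ (by lia), hexact₀.mono_cokernelDesc,
    exact_desc, fun j => hexact (j + 1)⟩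

lemma of_injectivePresentation (p : InjectivePresentation M)
    (h : HasInjectiveResolutionOfLength d (cokernel p.f)) :
    HasInjectiveResolutionOfLength (d + 1) M := by
  obtain ⟨I, ι, δ, w0, w, hI, hZ, hι, hexact₀, hexact⟩ := h
  refine ⟨fun | 0 => p.J | j + 1 => I j, p.f,
    fun | 0 => cokernel.π p.f ≫ ι | j + 1 => δ j,
    by simp, fun | 0 => by simp [w0] | j + 1 => w j, ?_, ?_, p.mono, ?_, ?_⟩
  · rintro (_ | j) hj
    · exact p.injective
    · exact hI j (by lia)
  · rintro (_ | j) hj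
    · lia
    · exact hZ j (by lia)
  · exact (exact_comp_mono_iff p.shortComplex ι).2 p.shortExact_shortComplex.exact
  · rintro (_ | j)
    · exact (exact_epi_comp_iff (ShortComplex.mk ι (δ 0) w0) (cokernel.π p.f)).2 hexact₀
    · exact hexact j

lemma hasInjectiveDimensionLE (h : HasInjectiveResolutionOfLength d M) :
    HasInjectiveDimensionLE M d := by
  induction d generalizing M with
  | zero => exact injective_iff_hasInjectiveDimensionLT_one.1 h.injective
  | succ d ih =>
    obtain ⟨p, hp⟩ := h.exists_injectivePresentation
    exact (p.shortExact_shortComplex.hasInjectiveDimensionLT_X₃_iff d p.injective).1 (ih hp)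

lemma of_hasInjectiveDimensionLE [EnoughInjectives C] (h : HasInjectiveDimensionLE M d) :
    HasInjectiveResolutionOfLength d M := by
  induction d generalizing M with
  | zero =>
    have := injective_iff_hasInjectiveDimensionLT_one.2 h
    exact of_injective
  | succ d ih =>
    obtain ⟨p⟩ := EnoughInjectives.presentation M
    exact of_injectivePresentation p
      (ih ((p.shortExact_shortComplex.hasInjectiveDimensionLT_X₃_iff d p.injective).2 h))

end HasInjectiveResolutionOfLength

section Adjunction

variable {A B : Type*} [Category A] [Category B] [Abelian A] [Abelian B]
  {L : B ⥤ A} {U : A ⥤ B} [PreservesFiniteColimits U]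

lemma exists_lift_of_injective_obj_X₁ (adj : L ⊣ U) {S : ShortComplex A} (hS : S.ShortExact)
    [Injective (U.obj S.X₁)] {N : B} (y : L.obj N ⟶ S.X₃) :
    ∃ z : L.obj N ⟶ S.X₂, z ≫ S.g = y := by
  have : PreservesLimits U := adj.rightAdjoint_preservesLimits
  have : U.Additive := Functor.additive_of_preserves_binary_products U
  have : Injective (S.map U).X₁ := ‹Injective (U.obj S.X₁)›
  have : IsSplitEpi (U.map S.g) := (hS.map_of_exact U).splittingOfInjective.isSplitEpi_g
  refine ⟨(adj.homEquiv _ _).symm (adj.homEquiv _ _ y ≫ section_ (U.map S.g)),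
    (adj.homEquiv _ _).injective ?_⟩
  rw [adj.homEquiv_naturality_right, Equiv.apply_symm_apply, Category.assoc, IsSplitEpi.id,
    Category.comp_id]

lemma hasInjectiveDimensionLE_obj_X₃ (adj : L ⊣ U) [L.PreservesMonomorphisms]
    {S : ShortComplex A} (hS : S.ShortExact) (hS₂ : Injective S.X₂) {n : ℕ}
    (hS₁ : HasInjectiveDimensionLE (U.obj S.X₁) (n + 1)) :
    HasInjectiveDimensionLE (U.obj S.X₃) n := by
  have : PreservesLimits U := adj.rightAdjoint_preservesLimits
  have : U.Additive := Functor.additive_of_preserves_binary_products U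
  exact ((hS.map_of_exact U).hasInjectiveDimensionLT_X₃_iff n (adj.map_injective _ hS₂)).2 hS₁

open Abelian

variable [EnoughInjectives A] [HasExt A]

lemma ext_one_leftAdjoint_obj_eq_zero (adj : L ⊣ U) {M : A} [Injective (U.obj M)] {N : B}
    (x : Ext (L.obj N) M 1) : x = 0 := by
  obtain ⟨p⟩ := EnoughInjectives.presentation M
  have hS := p.shortExact_shortComplex
  obtain ⟨x₃, rfl⟩ := Ext.covariant_sequence_exact₁ _ hS x (Ext.eq_zero_of_injective _) rfl
  obtain ⟨y, rfl⟩ := (Ext.mk₀_bijective _ _).surjective x₃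
  obtain ⟨z, rfl⟩ := exists_lift_of_injective_obj_X₁ adj hS y
  rw [← Ext.mk₀_comp_mk₀, Ext.comp_assoc_of_second_deg_zero, hS.comp_extClass, Ext.comp_zero]

variable [L.PreservesMonomorphisms]

lemma ext_leftAdjoint_obj_eq_zero (adj : L ⊣ U) {M : A} {n : ℕ}
    (hM : HasInjectiveDimensionLE (U.obj M) n) {N : B} {i : ℕ} (hi : n < i)
    (x : Ext (L.obj N) M i) : x = 0 := by
  obtain ⟨j, rfl⟩ := Nat.exists_eq_add_of_le' (Nat.one_le_of_lt hi)
  replace hM : HasInjectiveDimensionLE (U.obj M) j :=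
    hasInjectiveDimensionLT_of_ge _ (n + 1) _ (by lia)
  clear hi
  induction j generalizing M with
  | zero =>
    have := injective_iff_hasInjectiveDimensionLT_one.2 hM
    exact ext_one_leftAdjoint_obj_eq_zero adj x
  | succ j ih =>
    obtain ⟨p⟩ := EnoughInjectives.presentation M
    have hS := p.shortExact_shortComplex
    obtain ⟨x₃, rfl⟩ := Ext.covariant_sequence_exact₁ _ hS x (Ext.eq_zero_of_injective _) rfl
    rw [ih x₃ (hasInjectiveDimensionLE_obj_X₃ adj hS p.injective hM), Ext.zero_comp]

lemma ext_eq_zero_of_two_step_resolution (adj : L ⊣ U) {M : A} {n : ℕ}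
    (hM : HasInjectiveDimensionLE (U.obj M) n) {N : A} {N₁ N₂ : B} {f : L.obj N₁ ⟶ L.obj N₂}
    {g : L.obj N₂ ⟶ N} {w : f ≫ g = 0} (hS : (ShortComplex.mk f g w).ShortExact)
    {i : ℕ} (hi : n + 1 < i) (x : Ext N M i) : x = 0 := by
  obtain ⟨j, rfl⟩ := Nat.exists_eq_add_of_le (Nat.one_le_of_lt hi)
  obtain ⟨x₁, rfl⟩ := Ext.contravariant_sequence_exact₃ hS M x
    (ext_leftAdjoint_obj_eq_zero adj hM (by lia) _) rfl
  rw [ext_leftAdjoint_obj_eq_zero adj hM (by lia) x₁, Ext.comp_zero]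

end Adjunction

theorem injDim_le_succ_of_two_step_resolution_general
    {A B : Type*} [Category A] [Category B] [Abelian A] [Abelian B] [EnoughInjectives A]
    (L : B ⥤ A) (U : A ⥤ B) (adj : L ⊣ U)
    [PreservesFiniteLimits L] [PreservesFiniteColimits U]
    (hres : ∀ N : A, ∃ (N₁ N₂ : B) (f : L.obj N₁ ⟶ L.obj N₂) (g : L.obj N₂ ⟶ N)
      (w : f ≫ g = 0), Mono f ∧ Epi g ∧ (ShortComplex.mk f g w).Exact)
    (d : ℕ) (M : A) (hM : HasInjectiveResolutionOfLength d (U.obj M)) :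
    HasInjectiveResolutionOfLength (d + 1) M := by
  let := HasExt.standard A
  refine .of_hasInjectiveDimensionLE ((hasInjectiveDimensionLT_iff _ _).2 fun i hi N x => ?_)
  obtain ⟨N₁, N₂, f, g, w, hf, hg, hexact⟩ := hres N
  exact ext_eq_zero_of_two_step_resolution adj hM.hasInjectiveDimensionLE { exact := hexact }
    (by lia) x

/-- If `L ⊣ U` is an adjunction of exact functors between abelian categories with enough
injectives and every object `N` of `A` admits a two-step resolution
`0 → L(N₁) → L(N₂) → N → 0` by objects induced from `B`, then finite injective dimension
`≤ d` of `B` implies injective dimension `≤ d + 1` of `A`. -/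
theorem injDim_le_succ_of_two_step_resolution
    {A B : Type*} [Category A] [Category B] [Abelian A] [Abelian B]
    [EnoughInjectives A] [EnoughInjectives B]
    (L : B ⥤ A) (U : A ⥤ B) (adj : L ⊣ U)
    [PreservesFiniteLimits L] [PreservesFiniteColimits L]
    [PreservesFiniteLimits U] [PreservesFiniteColimits U]
    (hres : ∀ N : A, ∃ (N₁ N₂ : B) (f : L.obj N₁ ⟶ L.obj N₂) (g : L.obj N₂ ⟶ N)
      (w : f ≫ g = 0), Mono f ∧ Epi g ∧ (ShortComplex.mk f g w).Exact)
    (d : ℕ) (h : ∀ N : B, HasInjectiveResolutionOfLength d N) :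
    ∀ M : A, HasInjectiveResolutionOfLength (d + 1) M := by
  intro M
  exact injDim_le_succ_of_two_step_resolution_general L U adj hres d M (h _)
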